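/- arXiv:2507.15472 — 6 statements merged into one kernel-verified Lean document; each statement's English description precedes it below -/
import Mathlib

section
/- Let T be a tree with exactly three pendant vertices u1, u2, u3 and a single major vertex m. Then 1 is an eigenvalue of the Laplacian matrix L(T) if and only if, after a suitable relabeling of the pendant vertices, one of the following holds: (Type Ω̃_A) d(u1,m) ≡ 1 mod 3 and d(u2,m) ≡ 1 mod 3; or (Type Ω_B) d(u1,m) ≡ 2 mod 3, d(u2,m) ≡ 0 mod 3, and d(u3,m) ≡ 0 mod 3. -/
/-!
A tree with three pendant vertices and one major vertex `m` is a spider: three paths, the legs,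
from the pendant vertices to `m`, meeting only at `m`, and covering everything
(`exists_legs`; handshaking forces `deg m = 3`).

Along a leg `p 0, p 1, …, p a = m` starting at a pendant vertex, the equation `L x = x` reads
`x (p 1) = 0` and `x (p (k + 2)) = x (p (k + 1)) - x (p k)`, so `x (p k) = s * legSeq k` for the
sequence `1, 0, -1, -1, 0, 1, …`. What remains of `L x = x` is that the three legs agree at `m`
and that `2 * x m` is the sum of the values at the three neighbours of `m`
(`hasLapEigen_iff_legs`). Since `legSeq (n + 3) = - legSeq n`, on a leg of length `a` the values
at `m` and at the neighbour of `m` are, up to a common nonzero factor, `(1, 1)`, `(0, 1)` or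
`(-1, 0)` as `a ≡ 0, 1, 2 (mod 3)`. A nonzero solution with `x m = 0` therefore needs two legs of
length `≡ 1`; one with `x m ≠ 0` needs no leg of length `≡ 1` and exactly two of length `≡ 0`.
-/

open SimpleGraph Matrix

variable {V : Type*}

/-- A pendant vertex: a vertex of degree one. -/
def IsPendant (G : SimpleGraph V) (v : V) : Prop := (G.neighborSet v).ncard = 1

/-- A major vertex: a vertex of degree at least three. -/
def IsMajor (G : SimpleGraph V) (v : V) : Prop := 3 ≤ (G.neighborSet v).ncard

/-- `v` lies on the (unique, in a tree) path between `u` and `w`. -/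
def OnPath (G : SimpleGraph V) (u w v : V) : Prop :=
  G.dist u v + G.dist v w = G.dist u w

/-- The number of pendant vertices of a graph. -/
noncomputable def numPendant (G : SimpleGraph V) : ℕ :=
  Nat.card {v : V // IsPendant G v}

/-- The Laplacian matrix `D - A` over `ℝ`. -/
noncomputable def lapMat [Fintype V] (G : SimpleGraph V) : Matrix V V ℝ :=
  letI := Classical.decEq V
  letI : DecidableRel G.Adj := Classical.decRel _
  G.lapMatrix ℝ

/-- The signless Laplacian matrix `D + A` over `ℝ`. -/
noncomputable def signlessLapMat [Fintype V] (G : SimpleGraph V) : Matrix V V ℝ :=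
  letI := Classical.decEq V
  letI : DecidableRel G.Adj := Classical.decRel _
  G.degMatrix ℝ + G.adjMatrix ℝ

/-- The multiplicity of `μ` as an eigenvalue of the Laplacian matrix of `G`. -/
noncomputable def lapMult [Finite V] (G : SimpleGraph V) (μ : ℝ) : ℕ :=
  letI := Fintype.ofFinite V
  letI := Classical.decEq V
  Module.finrank ℝ (Module.End.eigenspace (Matrix.toLin' (lapMat G)) μ)

/-- `μ` is an eigenvalue of the Laplacian matrix of `G`. -/
def HasLapEigen [Finite V] (G : SimpleGraph V) (μ : ℝ) : Prop :=
  letI := Fintype.ofFinite V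
  ∃ x : V → ℝ, x ≠ 0 ∧ lapMat G *ᵥ x = μ • x

/-- Membership in the class `𝒬`: a tree in which any two distinct pendant vertices are
at distance `≡ 2 (mod 3)`. -/
def InQ [Finite V] (G : SimpleGraph V) : Prop :=
  G.IsTree ∧ ∀ u v : V, IsPendant G u → IsPendant G v → u ≠ v → G.dist u v % 3 = 2

/-- A node of a tree: a vertex at distance `≡ 1 (mod 3)` from every pendant vertex. -/
def IsNode (G : SimpleGraph V) (η : V) : Prop :=
  ∀ u : V, IsPendant G u → G.dist η u % 3 = 1

/-- Membership in the class `𝒫`: a path on `n` vertices with `n ≡ 2 (mod 3)`. -/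
def InP [Finite V] (G : SimpleGraph V) : Prop :=
  G.IsTree ∧ (∀ v : V, (G.neighborSet v).ncard ≤ 2) ∧ Nat.card V % 3 = 2

/-- The induced subgraph on `S` is a tree of class `𝒬` and `b ∈ S` is a node of it. -/
def NodeAttach [Finite V] (T : SimpleGraph V) (S : Set V) (b : V) : Prop :=
  ∃ hb : b ∈ S, InQ (T.induce S) ∧ IsNode (T.induce S) ⟨b, hb⟩

/-- The induced subgraph on `S` is a path of class `𝒫` and `b ∈ S` is a pendant vertex
of it. -/
def PendantAttach [Finite V] (T : SimpleGraph V) (S : Set V) (b : V) : Prop :=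
  ∃ hb : b ∈ S, InP (T.induce S) ∧ IsPendant (T.induce S) ⟨b, hb⟩

/-- The tree `T` is obtained from a tree `H` consisting of three internally disjoint
paths `P_{u j, m}` (`j = 0,1,2`) joined at `m`, whose three leg lengths satisfy `cond`,
together with trees `T i` (`i : Fin k`) of class `𝒬 ∪ 𝒫` (realized as the induced
subgraphs on the sets `S i`), by identifying for each `i` a vertex `a i` of `H`, lying on
some `P_{u j, m}` with `d(a i, u j) ≡ 1 (mod 3)`, with a vertex `b i` of `T i` which is a
node of `T i` if `T i ∈ 𝒬` and a pendant vertex of `T i` if `T i ∈ 𝒫`. -/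
def InGammaWith [Finite V] (T : SimpleGraph V) (cond : ℕ → ℕ → ℕ → Prop) : Prop :=
  ∃ (m : V) (u : Fin 3 → V) (k : ℕ) (a : Fin k → V) (S : Fin k → Set V),
    T.IsTree ∧
    Function.Injective u ∧
    (∀ j, u j ≠ m) ∧
    (∀ j j', j ≠ j' → ∀ v, OnPath T (u j) m v → OnPath T (u j') m v → v = m) ∧
    cond (T.dist (u 0) m) (T.dist (u 1) m) (T.dist (u 2) m) ∧
    (∀ i, ∃ j, OnPath T (u j) m (a i) ∧ T.dist (a i) (u j) % 3 = 1) ∧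
    (∀ i, S i ∩ {v | ∃ j, OnPath T (u j) m v} = {a i}) ∧
    (∀ i i', i ≠ i' → ∀ v ∈ S i ∩ S i', v = a i ∧ v = a i') ∧
    (∀ v, (∃ j, OnPath T (u j) m v) ∨ ∃ i, v ∈ S i) ∧
    (∀ v w, T.Adj v w →
      ((∃ j, OnPath T (u j) m v) ∧ (∃ j, OnPath T (u j) m w)) ∨ ∃ i, v ∈ S i ∧ w ∈ S i) ∧
    (∀ i, NodeAttach T (S i) (a i) ∨ PendantAttach T (S i) (a i))

/-- The class `Γ_A`: base tree in `Ω_A`. -/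
def InGammaA [Finite V] (T : SimpleGraph V) : Prop :=
  InGammaWith T (fun d₁ d₂ d₃ => d₁ % 3 = 1 ∧ d₂ % 3 = 1 ∧ d₃ % 3 ≠ 1)

/-- The class `Γ_B`: base tree in `Ω_B`. -/
def InGammaB [Finite V] (T : SimpleGraph V) : Prop :=
  InGammaWith T (fun d₁ d₂ d₃ => d₁ % 3 = 2 ∧ d₂ % 3 = 0 ∧ d₃ % 3 = 0)

/-- The class `Γ = Γ_A ∪ Γ_B`. -/
def InGamma [Finite V] (T : SimpleGraph V) : Prop := InGammaA T ∨ InGammaB T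

/-! ### The scalar recursion along a leg -/

/-- Values along a leg, counted from the pendant vertex, of a solution of `L x = x` that
takes the value `1` at the pendant vertex. -/
def legSeq : ℕ → ℝ
  | 0 => 1
  | 1 => 0
  | n + 2 => legSeq (n + 1) - legSeq n

theorem legSeq_add_three (n : ℕ) : legSeq (n + 3) = - legSeq n := by
  simp only [legSeq]; ring

/-- The values of `legSeq` at the end of a leg of length `n > 0` and one step before it, up to a
common nonzero factor. -/
theorem legSeq_cases (n : ℕ) (hn : 0 < n) : ∃ e : ℝ, e ≠ 0 ∧
    ((n % 3 = 0 ∧ legSeq n = e ∧ legSeq (n - 1) = e) ∨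
     (n % 3 = 1 ∧ legSeq n = 0 ∧ legSeq (n - 1) = e) ∨
     (n % 3 = 2 ∧ legSeq n = -e ∧ legSeq (n - 1) = 0)) := by
  induction n using Nat.strong_induction_on with
  | _ n ih =>
    rcases n with _ | _ | _ | _ | n
    · omega
    · exact ⟨1, by norm_num, by simp [legSeq]⟩
    · exact ⟨1, by norm_num, by simp [legSeq]⟩
    · exact ⟨-1, by norm_num, by simp [legSeq]⟩
    · obtain ⟨e, he, h⟩ := ih (n + 1) (by omega) (by omega)
      refine ⟨-e, neg_ne_zero.2 he, ?_⟩
      have h1 : legSeq (n + 1 + 1 + 1 + 1) = - legSeq (n + 1) := legSeq_add_three (n + 1)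
      have h2 : legSeq (n + 1 + 1 + 1 + 1 - 1) = - legSeq (n + 1 - 1) := legSeq_add_three n
      have h3 : (n + 1 + 1 + 1 + 1) % 3 = (n + 1) % 3 := by omega
      rw [h1, h2, h3]
      simpa [neg_eq_iff_eq_neg] using h

/-- Residue condition on the three leg lengths. -/
def LegCond (a : Fin 3 → ℕ) : Prop :=
  (a 0 % 3 = 1 ∧ a 1 % 3 = 1) ∨ (a 0 % 3 = 1 ∧ a 2 % 3 = 1) ∨ (a 1 % 3 = 1 ∧ a 2 % 3 = 1) ∨
  (a 0 % 3 = 2 ∧ a 1 % 3 = 0 ∧ a 2 % 3 = 0) ∨ (a 0 % 3 = 0 ∧ a 1 % 3 = 2 ∧ a 2 % 3 = 0) ∨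
  (a 0 % 3 = 0 ∧ a 1 % 3 = 0 ∧ a 2 % 3 = 2)

/-- Solvability of the system left after eliminating the legs: `s i` is the value at the `i`-th
pendant vertex and `c` the value at the major vertex. -/
theorem legSystem_iff (a : Fin 3 → ℕ) (ha : ∀ i, 0 < a i) :
    (∃ (s : Fin 3 → ℝ) (c : ℝ), s ≠ 0 ∧ (∀ i, s i * legSeq (a i) = c) ∧
      2 * c = ∑ i, s i * legSeq (a i - 1)) ↔ LegCond a := by
  obtain ⟨e0, he0, h0⟩ := legSeq_cases (a 0) (ha 0)
  obtain ⟨e1, he1, h1⟩ := legSeq_cases (a 1) (ha 1)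
  obtain ⟨e2, he2, h2⟩ := legSeq_cases (a 2) (ha 2)
  constructor
  · rintro ⟨s, c, hs, hc, hsum⟩
    have hs' : ¬ (s 0 * e0 = 0 ∧ s 1 * e1 = 0 ∧ s 2 * e2 = 0) := by
      rintro ⟨t0, t1, t2⟩
      apply hs
      funext i
      fin_cases i
      · simpa [he0] using t0
      · simpa [he1] using t1
      · simpa [he2] using t2
    have c0 := hc 0
    have c1 := hc 1
    have c2 := hc 2
    rw [Fin.sum_univ_three] at hsum
    by_contra hQ
    apply hs'
    unfold LegCond at hQ
    rcases h0 with ⟨h0, f0, g0⟩ | ⟨h0, f0, g0⟩ | ⟨h0, f0, g0⟩ <;>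
    rcases h1 with ⟨h1, f1, g1⟩ | ⟨h1, f1, g1⟩ | ⟨h1, f1, g1⟩ <;>
    rcases h2 with ⟨h2, f2, g2⟩ | ⟨h2, f2, g2⟩ | ⟨h2, f2, g2⟩ <;>
    first
    | (exfalso; apply hQ; omega)
    | (rw [f0] at c0; rw [f1] at c1; rw [f2] at c2; rw [g0, g1, g2] at hsum
       refine ⟨?_, ?_, ?_⟩ <;> linarith)
  · intro hQ
    unfold LegCond at hQ
    rcases hQ with ⟨t0, t1⟩ | ⟨t0, t2⟩ | ⟨t1, t2⟩ | ⟨t0, t1, t2⟩ | ⟨t0, t1, t2⟩ | ⟨t0, t1, t2⟩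
    · have f0 : legSeq (a 0) = 0 ∧ legSeq (a 0 - 1) = e0 := by
        rcases h0 with h | h | h <;> first | omega | exact h.2
      have f1 : legSeq (a 1) = 0 ∧ legSeq (a 1 - 1) = e1 := by
        rcases h1 with h | h | h <;> first | omega | exact h.2
      refine ⟨![e0⁻¹, -e1⁻¹, 0], 0, fun h => by simpa [he0] using congrFun h 0, ?_, ?_⟩
      · intro i; fin_cases i <;> simp [f0, f1]
      · rw [Fin.sum_univ_three]; simp [f0, f1, he0, he1]
    · have f0 : legSeq (a 0) = 0 ∧ legSeq (a 0 - 1) = e0 := by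
        rcases h0 with h | h | h <;> first | omega | exact h.2
      have f2 : legSeq (a 2) = 0 ∧ legSeq (a 2 - 1) = e2 := by
        rcases h2 with h | h | h <;> first | omega | exact h.2
      refine ⟨![e0⁻¹, 0, -e2⁻¹], 0, fun h => by simpa [he0] using congrFun h 0, ?_, ?_⟩
      · intro i; fin_cases i <;> simp [f0, f2]
      · rw [Fin.sum_univ_three]; simp [f0, f2, he0, he2]
    · have f1 : legSeq (a 1) = 0 ∧ legSeq (a 1 - 1) = e1 := by
        rcases h1 with h | h | h <;> first | omega | exact h.2
      have f2 : legSeq (a 2) = 0 ∧ legSeq (a 2 - 1) = e2 := by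
        rcases h2 with h | h | h <;> first | omega | exact h.2
      refine ⟨![0, e1⁻¹, -e2⁻¹], 0, fun h => by simpa [he1] using congrFun h 1, ?_, ?_⟩
      · intro i; fin_cases i <;> simp [f1, f2]
      · rw [Fin.sum_univ_three]; simp [f1, f2, he1, he2]
    -- In the remaining cases no `legSeq (a i)` vanishes, and scaling to `c = 1` forces `s`.
    all_goals
      refine ⟨fun i => (legSeq (a i))⁻¹, 1, ?_, ?_, ?_⟩
      · intro h
        have h' := congrFun h 0
        rcases h0 with h | h | h <;> first | omega | simp [h, he0] at h'
      · intro i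
        apply inv_mul_cancel₀
        fin_cases i
        · rcases h0 with h | h | h <;> first | omega | simp [h, he0]
        · rcases h1 with h | h | h <;> first | omega | simp [h, he1]
        · rcases h2 with h | h | h <;> first | omega | simp [h, he2]
      · rw [Fin.sum_univ_three]
        rcases h0 with h0 | h0 | h0 <;> try omega
        all_goals rcases h1 with h1 | h1 | h1 <;> try omega
        all_goals rcases h2 with h2 | h2 | h2 <;> try omega
        all_goals
          simp [h0, h1, h2, he0, he1, he2]
          norm_num

/-! ### The legs of a spider -/

/-- `p` describes `T` as a spider with centre `m`: leg `i` consists of the vertices `p i k` for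
`k ≤ a i`, counted from the pendant end towards `p i (a i) = m`. Values beyond `a i` carry no
meaning. -/
structure IsSpider (T : SimpleGraph V) (m : V) (a : Fin 3 → ℕ) (p : Fin 3 → ℕ → V) : Prop where
  pos : ∀ i, 0 < a i
  last : ∀ i, p i (a i) = m
  ne : ∀ i k, k < a i → p i k ≠ m
  cover : ∀ v, v ≠ m → ∃ i k, k < a i ∧ p i k = v
  inj : ∀ i j k l, k < a i → l < a j → p i k = p j l → i = j ∧ k = l
  nbr_zero : ∀ i, T.neighborSet (p i 0) = {p i 1}
  nbr_succ : ∀ i k, k + 1 < a i → T.neighborSet (p i (k + 1)) = {p i k, p i (k + 2)}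
  nbr_centre : T.neighborSet m = Set.range fun i => p i (a i - 1)

/-- By handshaking, `∑ (deg v - 2) = -2` in a tree, so the major vertex has degree three. -/
theorem ncard_neighborSet_major [Finite V] (T : SimpleGraph V) (hT : T.IsTree) (m : V)
    (u : Fin 3 → V) (hu : Function.Injective u) (hp : ∀ i, IsPendant T (u i))
    (hpend : ∀ w, IsPendant T w → ∃ i, u i = w)
    (hm : IsMajor T m) (hmaj : ∀ w, IsMajor T w → w = m) :
    (T.neighborSet m).ncard = 3 := by
  classical
  let _ := Fintype.ofFinite V
  have hdeg : ∀ v, (T.neighborSet v).ncard = T.degree v := fun v => by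
    rw [Set.ncard_eq_toFinset_card', ← SimpleGraph.card_neighborFinset_eq_degree,
      SimpleGraph.neighborFinset]
  have hum : ∀ i, u i ≠ m := fun i h => by
    have h1 := hp i
    rw [h] at h1
    unfold IsPendant at h1
    unfold IsMajor at hm
    omega
  have : Nontrivial V := ⟨u 0, m, hum 0⟩
  have hsum := T.sum_degrees_eq_twice_card_edges
  have hcard := hT.card_edgeFinset
  -- The degree excess `deg v - 2` is supported on the `u i` and on `m`.
  have hpt : ∀ v, (T.degree v : ℤ) - 2 =
      (if v = m then (T.degree m : ℤ) - 2 else 0) + ∑ i, if v = u i then (-1 : ℤ) else 0 := by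
    intro v
    by_cases hv : v = m
    · subst hv
      have : ∀ i, v ≠ u i := fun i => (hum i).symm
      simp [this]
    · by_cases hv' : ∃ i, u i = v
      · obtain ⟨i, rfl⟩ := hv'
        have h1 : T.degree (u i) = 1 := by rw [← hdeg]; exact hp i
        simp [hum i, hu.eq_iff, h1]
      · have h0 : 0 < T.degree v := hT.connected.preconnected.degree_pos_of_nontrivial v
        have h1 : T.degree v ≠ 1 := fun h => hv' (hpend v (by unfold IsPendant; rw [hdeg, h]))
        have h3 : ¬ 3 ≤ T.degree v := fun h => hv (hmaj v (by unfold IsMajor; rw [hdeg]; exact h))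
        have h2 : T.degree v = 2 := by omega
        push Not at hv'
        have : ∀ i, v ≠ u i := fun i => (hv' i).symm
        simp [this, hv, h2]
  have hS := Finset.sum_congr (rfl : (Finset.univ : Finset V) = Finset.univ) fun v _ => hpt v
  rw [Finset.sum_add_distrib, Finset.sum_comm, Finset.sum_sub_distrib] at hS
  simp only [Finset.sum_ite_eq', Finset.mem_univ, if_true, Finset.sum_const, Finset.card_univ,
    Fintype.card_fin] at hS
  rw [← Nat.cast_sum, hsum] at hS
  rw [hdeg]
  simp only [nsmul_eq_mul] at hS
  push_cast at hS
  omega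

/-- The legs are geodesics from the pendant vertices to `m`. Every vertex other than `m` has degree
at most two, so interior vertices of a leg have no neighbours off it. -/
theorem exists_legs [Finite V] (T : SimpleGraph V) (hT : T.IsTree) (m : V)
    (u : Fin 3 → V) (hu : Function.Injective u) (hp : ∀ i, IsPendant T (u i))
    (hpend : ∀ w, IsPendant T w → ∃ i, u i = w)
    (hm : IsMajor T m) (hmaj : ∀ w, IsMajor T w → w = m) :
    ∃ p, IsSpider T m (fun i => T.dist (u i) m) p := by
  have hc := hT.connected
  have hum : ∀ i, u i ≠ m := fun i h => by
    have h1 := hp i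
    rw [h] at h1
    unfold IsPendant at h1
    unfold IsMajor at hm
    omega
  choose P hP using fun i => hc.exists_walk_length_eq_dist (u i) m
  set a : Fin 3 → ℕ := fun i => T.dist (u i) m with ha
  set p : Fin 3 → ℕ → V := fun i k => (P i).getVert k with hpdef
  have pos : ∀ i, 0 < a i := fun i => hc.pos_dist_of_ne (hum i)
  have first : ∀ i, p i 0 = u i := fun i => (P i).getVert_zero
  have last : ∀ i, p i (a i) = m := fun i => by
    simp only [hpdef, ha, ← hP i]; exact (P i).getVert_length
  have adj : ∀ i k, k < a i → T.Adj (p i k) (p i (k + 1)) := fun i k hk =>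
    (P i).adj_getVert_succ (by rw [hP i]; exact hk)
  have hd : ∀ i k, k ≤ a i → T.dist (p i k) m = a i - k := by
    intro i k hk
    have h1 : T.dist (u i) (p i k) ≤ k :=
      (SimpleGraph.dist_le ((P i).take k)).trans (by rw [SimpleGraph.Walk.take_length]; omega)
    have h2 : T.dist (p i k) m ≤ a i - k :=
      (SimpleGraph.dist_le ((P i).drop k)).trans
        (by rw [SimpleGraph.Walk.drop_length, hP i])
    have h3 : a i ≤ T.dist (u i) (p i k) + T.dist (p i k) m := hc.dist_triangle
    omega
  have ne : ∀ i k, k < a i → p i k ≠ m := by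
    intro i k hk h
    have := hd i k hk.le
    rw [h, SimpleGraph.dist_self] at this
    omega
  have nbr_zero : ∀ i, T.neighborSet (p i 0) = {p i 1} := by
    intro i
    symm
    refine Set.eq_of_subset_of_ncard_le ?_ ?_ (Set.toFinite _)
    · simpa using adj i 0 (pos i)
    · rw [first, hp i, Set.ncard_singleton]
  have ne2 : ∀ i k, k + 1 < a i → p i k ≠ p i (k + 2) := by
    intro i k hk h
    have h1 := hd i k (by omega)
    have h2 := hd i (k + 2) (by omega)
    rw [h] at h1
    omega
  have nbr_succ : ∀ i k, k + 1 < a i → T.neighborSet (p i (k + 1)) = {p i k, p i (k + 2)} := by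
    intro i k hk
    symm
    refine Set.eq_of_subset_of_ncard_le ?_ ?_ (Set.toFinite _)
    · rintro w (rfl | rfl)
      · exact (adj i k (by omega)).symm
      · exact adj i (k + 1) hk
    · rw [Set.ncard_pair (ne2 i k hk)]
      by_contra h
      exact ne i (k + 1) hk (hmaj _ (by unfold IsMajor; omega))
  have not_pend : ∀ i j k, k + 1 < a i → p j 0 ≠ p i (k + 1) := by
    intro i j k hk h
    have h1 := hp j
    unfold IsPendant at h1
    rw [← first, h, nbr_succ i k hk, Set.ncard_pair (ne2 i k hk)] at h1
    omega
  -- Two legs sharing a vertex other than `m` coincide from there back to the pendant vertex.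
  have inj : ∀ i j k l, k < a i → l < a j → p i k = p j l → i = j ∧ k = l := by
    intro i j k
    induction k with
    | zero =>
      intro l hk hl h
      rcases l with _ | l
      · rw [first, first] at h
        exact ⟨hu h, rfl⟩
      · exact absurd h (not_pend j i l hl)
    | succ k ih =>
      intro l hk hl h
      rcases l with _ | l
      · exact absurd h.symm (not_pend i j k hk)
      · have hmem : p i k ∈ T.neighborSet (p j (l + 1)) := by
          rw [← h, nbr_succ i k hk]; simp
        rw [nbr_succ j l hl] at hmem
        rcases hmem with hmem | hmem
        · obtain ⟨h1, h2⟩ := ih l (by omega) (by omega) hmem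
          exact ⟨h1, by omega⟩
        · have d1 := hd i (k + 1) hk.le
          have d2 := hd j (l + 1) hl.le
          have d3 := hd i k (by omega)
          have d4 := hd j (l + 2) (by omega)
          rw [h] at d1
          rw [hmem] at d3
          omega
  have nbr_centre : T.neighborSet m = Set.range fun i => p i (a i - 1) := by
    symm
    refine Set.eq_of_subset_of_ncard_le ?_ ?_ (Set.toFinite _)
    · rintro w ⟨i, rfl⟩
      have h := adj i (a i - 1) (by have := pos i; omega)
      rw [Nat.sub_add_cancel (pos i), last] at h
      exact h.symm
    · rw [ncard_neighborSet_major T hT m u hu hp hpend hm hmaj, ← Set.image_univ,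
        Set.ncard_image_of_injective, Set.ncard_univ, Nat.card_fin]
      intro i j h
      exact (inj i j _ _ (by have := pos i; omega) (by have := pos j; omega) h).1
  have cover : ∀ v, v ≠ m → ∃ i k, k < a i ∧ p i k = v := by
    -- The union of the legs is closed under adjacency, and `T` is connected.
    have key : ∀ v, T.Reachable m v → v = m ∨ ∃ i k, k < a i ∧ p i k = v := by
      intro v hv
      rw [SimpleGraph.reachable_iff_reflTransGen] at hv
      induction hv with
      | refl => exact Or.inl rfl
      | @tail b w _ hadj ih =>
        have hw : w ∈ T.neighborSet b := hadj
        rcases ih with rfl | ⟨i, k, hk, rfl⟩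
        · rw [nbr_centre] at hw
          obtain ⟨i, rfl⟩ := hw
          exact Or.inr ⟨i, _, by have := pos i; omega, rfl⟩
        · have hstep : ∀ l, l ≤ a i → p i l = m ∨ ∃ i' k', k' < a i' ∧ p i' k' = p i l := by
            intro l hl
            rcases hl.lt_or_eq with h | rfl
            · exact Or.inr ⟨i, l, h, rfl⟩
            · exact Or.inl (last i)
          rcases k with _ | k
          · rw [nbr_zero] at hw
            rw [Set.mem_singleton_iff.1 hw]
            exact hstep 1 (pos i)
          · rw [nbr_succ i k hk] at hw
            rcases hw with rfl | rfl
            · exact hstep k (by omega)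
            · exact hstep (k + 2) (by omega)
    intro v hv
    exact (key v (hc.preconnected m v)).resolve_left hv
  exact ⟨p, pos, last, ne, cover, inj, nbr_zero, nbr_succ, nbr_centre⟩

/-! ### Reduction of the eigenvalue equation -/

theorem lapMat_mulVec_apply [Fintype V] (T : SimpleGraph V) (x : V → ℝ) (v : V) :
    (lapMat T *ᵥ x) v = (T.neighborSet v).ncard * x v - ∑ᶠ w ∈ T.neighborSet v, x w := by
  classical
  unfold lapMat
  rw [SimpleGraph.lapMatrix_mulVec_apply, Set.ncard_eq_toFinset_card',
    finsum_mem_eq_toFinset_sum, ← SimpleGraph.card_neighborFinset_eq_degree,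
    SimpleGraph.neighborFinset]

/-- On a spider, `L x = x` splits into the recursion along the legs and one equation at the
centre. -/
theorem lapMat_eq_iff [Fintype V] {T : SimpleGraph V} {m : V} {a : Fin 3 → ℕ}
    {p : Fin 3 → ℕ → V} (h : IsSpider T m a p) (x : V → ℝ) :
    lapMat T *ᵥ x = (1 : ℝ) • x ↔
      (∀ i, x (p i 1) = 0) ∧
      (∀ i k, k + 1 < a i → x (p i (k + 2)) = x (p i (k + 1)) - x (p i k)) ∧
      2 * x m = ∑ i, x (p i (a i - 1)) := by
  have e0 : ∀ i, (lapMat T *ᵥ x) (p i 0) = x (p i 0) - x (p i 1) := by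
    intro i
    rw [lapMat_mulVec_apply, h.nbr_zero, Set.ncard_singleton, finsum_mem_singleton]
    simp
  have ne2 : ∀ i k, k + 1 < a i → p i k ≠ p i (k + 2) := by
    intro i k hk he
    rcases (show k + 2 ≤ a i by omega).lt_or_eq with h' | h'
    · have := (h.inj i i k (k + 2) (by omega) h' he).2
      omega
    · rw [h', h.last] at he
      exact h.ne i k (by omega) he
  have e1 : ∀ i k, k + 1 < a i →
      (lapMat T *ᵥ x) (p i (k + 1)) = 2 * x (p i (k + 1)) - (x (p i k) + x (p i (k + 2))) := by
    intro i k hk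
    rw [lapMat_mulVec_apply, h.nbr_succ i k hk, Set.ncard_pair (ne2 i k hk),
      finsum_mem_pair (ne2 i k hk)]
    simp
  have hinj : Function.Injective fun i => p i (a i - 1) := fun i j hij =>
    (h.inj i j _ _ (by have := h.pos i; omega) (by have := h.pos j; omega) hij).1
  have e2 : (lapMat T *ᵥ x) m = 3 * x m - ∑ i, x (p i (a i - 1)) := by
    rw [lapMat_mulVec_apply, h.nbr_centre, finsum_mem_range hinj, finsum_eq_sum_of_fintype,
      ← Set.image_univ, Set.ncard_image_of_injective _ hinj, Set.ncard_univ, Nat.card_fin]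
    simp
  rw [one_smul]
  constructor
  · intro hx
    refine ⟨fun i => ?_, fun i k hk => ?_, ?_⟩
    · have := e0 i
      rw [hx] at this
      linarith
    · have := e1 i k hk
      rw [hx] at this
      linarith
    · rw [hx] at e2
      linarith
  · rintro ⟨h0, h1, h2⟩
    funext v
    by_cases hv : v = m
    · subst hv
      linarith
    · obtain ⟨i, k, hk, rfl⟩ := h.cover v hv
      rcases k with _ | k
      · rw [e0, h0, sub_zero]
      · rw [e1 i k hk, h1 i k hk]
        ring

/-- On a spider, an eigenvector for `1` is determined by its values `s i` at the pendant vertices;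
`c` is its value at the centre. -/
theorem hasLapEigen_iff_legs [Finite V] {T : SimpleGraph V} {m : V} {a : Fin 3 → ℕ}
    {p : Fin 3 → ℕ → V} (h : IsSpider T m a p) :
    HasLapEigen T 1 ↔ ∃ (s : Fin 3 → ℝ) (c : ℝ), s ≠ 0 ∧ (∀ i, s i * legSeq (a i) = c) ∧
      2 * c = ∑ i, s i * legSeq (a i - 1) := by
  classical
  unfold HasLapEigen
  let _ := Fintype.ofFinite V
  constructor
  · rintro ⟨x, hx0, hx⟩
    obtain ⟨h0, h1, h2⟩ := (lapMat_eq_iff h x).1 hx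
    have key : ∀ i k, k ≤ a i → x (p i k) = x (p i 0) * legSeq k := by
      intro i k
      induction k using Nat.twoStepInduction with
      | zero => intro _; simp [legSeq]
      | one => intro _; simp [legSeq, h0]
      | more k ih0 ih1 =>
        intro hk
        rw [h1 i k (by omega), ih0 (by omega), ih1 (by omega), legSeq]
        ring
    have hm : ∀ i, x (p i 0) * legSeq (a i) = x m := fun i => by
      rw [← key i _ le_rfl, h.last]
    refine ⟨fun i => x (p i 0), x m, ?_, hm, ?_⟩
    · intro hs
      apply hx0
      have hs' : ∀ i, x (p i 0) = 0 := fun i => congrFun hs i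
      funext v
      by_cases hv : v = m
      · rw [hv, ← hm 0, hs', zero_mul, Pi.zero_apply]
      · obtain ⟨i, k, hk, rfl⟩ := h.cover v hv
        rw [key i k hk.le, hs', zero_mul, Pi.zero_apply]
    · rw [h2]
      exact Finset.sum_congr rfl fun i _ => key i _ (Nat.sub_le _ _)
  · rintro ⟨s, c, hs, hc, hsum⟩
    choose! I K hK hIK using h.cover
    -- `I v` and `K v` are the leg of `v` and its position on that leg.
    let x : V → ℝ := fun v => if v = m then c else s (I v) * legSeq (K v)
    have hxm : x m = c := if_pos rfl
    have hxp : ∀ i k, k ≤ a i → x (p i k) = s i * legSeq k := by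
      intro i k hk
      rcases hk.lt_or_eq with hk | rfl
      · have hne := h.ne i k hk
        obtain ⟨h1, h2⟩ := h.inj _ _ _ _ (hK _ hne) hk (hIK _ hne)
        simp only [x, if_neg hne, h2]
        rw [h1]
      · rw [h.last, hxm, hc]
    refine ⟨x, fun hx => hs ?_, (lapMat_eq_iff h x).2 ⟨fun i => ?_, fun i k hk => ?_, ?_⟩⟩
    · funext i
      have := hxp i 0 (Nat.zero_le _)
      rw [hx] at this
      simpa [legSeq] using this.symm
    · rw [hxp i 1 (h.pos i)]
      simp [legSeq]
    · rw [hxp i _ hk, hxp i _ hk.le, hxp i k (by omega), legSeq]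
      ring
    · rw [hxm, hsum]
      exact Finset.sum_congr rfl fun i _ => (hxp i _ (Nat.sub_le _ _)).symm

/-- Let `T` be a tree with exactly three pendant vertices
`u₁, u₂, u₃` and a single major vertex `m`. Then `1` is an eigenvalue of the Laplacian
matrix `L(T)` if and only if, after a suitable relabeling of the pendant vertices, one
of the following holds:
(Type `Ω̃_A`) `d(u₁,m) ≡ 1` and `d(u₂,m) ≡ 1 (mod 3)`; or
(Type `Ω_B`) `d(u₁,m) ≡ 2`, `d(u₂,m) ≡ 0` and `d(u₃,m) ≡ 0 (mod 3)`. -/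
theorem stmt_9 {V : Type*} [Finite V] (T : SimpleGraph V) (hT : T.IsTree)
    (u₁ u₂ u₃ m : V) (hdist : List.Pairwise (· ≠ ·) [u₁, u₂, u₃])
    (h₁ : IsPendant T u₁) (h₂ : IsPendant T u₂) (h₃ : IsPendant T u₃)
    (hpend : ∀ w : V, IsPendant T w → w ∈ ({u₁, u₂, u₃} : Set V))
    (hm : IsMajor T m) (hmaj : ∀ w : V, IsMajor T w → w = m) :
    HasLapEigen T 1 ↔
      ∃ w₁ w₂ w₃ : V, ({w₁, w₂, w₃} : Set V) = ({u₁, u₂, u₃} : Set V) ∧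
        ((T.dist w₁ m % 3 = 1 ∧ T.dist w₂ m % 3 = 1) ∨
          (T.dist w₁ m % 3 = 2 ∧ T.dist w₂ m % 3 = 0 ∧ T.dist w₃ m % 3 = 0)) := by
  have h12 : u₁ ≠ u₂ ∧ u₁ ≠ u₃ ∧ u₂ ≠ u₃ := by
    simp at hdist
    tauto
  obtain ⟨n12, n13, n23⟩ := h12
  obtain ⟨p, hp⟩ := exists_legs T hT m ![u₁, u₂, u₃]
    (by
      intro i j
      fin_cases i <;> fin_cases j <;> simp [n12, n13, n23, n12.symm, n13.symm, n23.symm])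
    (by intro i; fin_cases i <;> assumption)
    (by
      intro w hw
      rcases hpend w hw with rfl | rfl | rfl
      exacts [⟨0, rfl⟩, ⟨1, rfl⟩, ⟨2, rfl⟩])
    hm hmaj
  rw [hasLapEigen_iff_legs hp, legSystem_iff _ hp.pos]
  simp only [LegCond, Matrix.cons_val]
  constructor
  · rintro (h | h | h | h | h | h)
    · exact ⟨u₁, u₂, u₃, rfl, Or.inl h⟩
    · exact ⟨u₁, u₃, u₂, by grind, Or.inl h⟩
    · exact ⟨u₂, u₃, u₁, by grind, Or.inl h⟩
    · exact ⟨u₁, u₂, u₃, rfl, Or.inr h⟩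
    · exact ⟨u₂, u₁, u₃, by grind, Or.inr ⟨h.2.1, h.1, h.2.2⟩⟩
    · exact ⟨u₃, u₁, u₂, by grind, Or.inr ⟨h.2.2, h.1, h.2.1⟩⟩
  · rintro ⟨w₁, w₂, w₃, hw, h⟩
    have m1 : u₁ ∈ ({w₁, w₂, w₃} : Set V) := by rw [hw]; simp
    have m2 : u₂ ∈ ({w₁, w₂, w₃} : Set V) := by rw [hw]; simp
    have m3 : u₃ ∈ ({w₁, w₂, w₃} : Set V) := by rw [hw]; simp
    clear hw
    -- As `u₁`, `u₂`, `u₃` are distinct, only the six bijections `u ↔ w` survive.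
    rcases m1 with rfl | rfl | rfl <;> rcases m2 with rfl | rfl | rfl <;>
      rcases m3 with rfl | rfl | rfl <;> first | contradiction | omega
end

section
/- Let T be a tree with exactly three pendant vertices u1, u2, u3 and a major vertex m such that d(u1,m) ≡ 1 mod 3 and d(u2,m) ≡ 1 mod 3. Then 1 is an eigenvalue of the Laplacian matrix L(T). -/
/-!
Root the tree at the major vertex `m`. Removing `m` splits `T` into branches, one for each neighbour
of `m`, and each branch contains a pendant vertex (a vertex of the branch farthest from `m`). As `m`
has at least three neighbours and there are only three pendant vertices, each branch contains
exactly one of them (`branch_injOn`). The handshake lemma forces every vertex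
other than `m` and the pendant vertices to have degree two (`degree_eq_two`), so the branches are
paths.

Let `g` be the solution `0, 1, 1, 0, -1, -1, …` of `g (k + 2) = g (k + 1) - g k`. The eigenvector is
`g (d(m, v))` on the branch of `u₁`, its negative on the branch of `u₂`, and zero elsewhere. The
recurrence is the eigenvalue equation for `1` at a vertex of degree two; at `m` the two nonzero
neighbours cancel; and at `u₁`, `u₂`, whose distance to `m` is `≡ 1 (mod 3)`, the equation reduces
to the vanishing of `g` at multiples of `3`.
-/


open SimpleGraph Matrix

variable {V : Type*}

/-- The entries of the eigenvector along a branch, indexed by the distance to the centre: the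
solution of the eigenvalue equation for `1` at degree-two vertices with initial values `0, 1`. -/
noncomputable def legValue : ℕ → ℝ
  | 0 => 0
  | 1 => 1
  | (k + 2) => legValue (k + 1) - legValue k

lemma legValue_add_three (k : ℕ) : legValue (k + 3) = -legValue k := by
  simp [legValue]

lemma legValue_three_mul (k : ℕ) : legValue (3 * k) = 0 := by
  induction k with
  | zero => simp [legValue]
  | succ k ih => rw [Nat.mul_succ, legValue_add_three, ih, neg_zero]

/-- In a tree rooted at `m`, a vertex has at most one parent. -/
lemma parent_unique {V : Type*} {T : SimpleGraph V} (hT : T.IsTree) {m v w w' : V}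
    (hw : T.Adj w v) (hw' : T.Adj w' v) (hd : T.dist m v = T.dist m w + 1)
    (hd' : T.dist m v = T.dist m w' + 1) : w = w' := by
  obtain ⟨p, hp⟩ := hT.connected.exists_walk_length_eq_dist m w
  obtain ⟨q, hq⟩ := hT.connected.exists_walk_length_eq_dist m w'
  have h1 : (p.concat hw).IsPath := Walk.isPath_of_length_eq_dist _ (by simp [hp, hd])
  have h2 : (q.concat hw').IsPath := Walk.isPath_of_length_eq_dist _ (by simp [hq, hd'])
  have h := (hT.existsUnique_path m v).unique h1 h2
  simpa using congrArg Walk.penultimate h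

/-- Every vertex `v ≠ m` lies in the branch of a neighbour `b v` of `m`, namely the second vertex of
the path from `m` to `v`; adjacent vertices other than `m` lie in the same branch. -/
lemma exists_branch {V : Type*} {T : SimpleGraph V} (hT : T.IsTree) (m : V) :
    ∃ b : V → V, (∀ n, T.Adj m n → b n = n) ∧ (∀ v, v ≠ m → T.Adj m (b v)) ∧
      ∀ v w, v ≠ m → w ≠ m → T.Adj v w → b v = b w := by
  choose P hP using fun v => hT.connected.exists_walk_length_eq_dist m v
  have hpath : ∀ v, (P v).IsPath := fun v => Walk.isPath_of_length_eq_dist _ (hP v)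
  have hnil : ∀ v, v ≠ m → ¬ (P v).Nil := fun v hv h => hv h.eq.symm
  have key : ∀ v w, v ≠ m → T.Adj v w → T.dist m w = T.dist m v + 1 →
      (P v).snd = (P w).snd := by
    intro v w hv hadj hd
    have h1 : ((P v).concat hadj).IsPath := Walk.isPath_of_length_eq_dist _ (by simp [hP, hd])
    rw [(hT.existsUnique_path m w).unique (hpath w) h1]
    have hlen : 1 ≤ (P v).length := by
      rw [hP]
      exact (hT.connected.pos_dist_of_ne hv.symm)
    rw [Walk.concat_eq_append]
    unfold Walk.snd
    rw [Walk.getVert_append]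
    split_ifs with h
    · rfl
    · have : (P v).length = 1 := by omega
      rw [this, Nat.sub_self, Walk.getVert_zero, ← this, Walk.getVert_length]
  refine ⟨fun v => (P v).snd, fun n hn => ?_, fun v hv => Walk.adj_snd (hnil v hv), ?_⟩
  · have : (P n).length = 1 := by rw [hP, dist_eq_one_iff_adj]; exact hn
    change (P n).getVert 1 = n
    rw [← this, Walk.getVert_length]
  · intro v w hv hw hadj
    rcases hT.dist_eq_dist_add_one_of_adj m hadj with h | h
    · exact (key w v hw hadj.symm h).symm
    · exact key v w hv hadj h

lemma ncard_neighborSet_eq_degree {V : Type*} [Fintype V] (T : SimpleGraph V) [DecidableRel T.Adj]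
    (v : V) : (T.neighborSet v).ncard = T.degree v := by
  rw [Set.ncard_eq_toFinset_card']
  rfl

/-- Each branch contains a pendant vertex: the vertex of the branch farthest from `m` has only its
parent as a neighbour. -/
lemma exists_pendant_in_branch {V : Type*} [Finite V] {T : SimpleGraph V} (hT : T.IsTree) {m : V}
    {b : V → V} (hb1 : ∀ n, T.Adj m n → b n = n)
    (hb3 : ∀ v w, v ≠ m → w ≠ m → T.Adj v w → b v = b w) {n : V} (hn : T.Adj m n) :
    ∃ v, IsPendant T v ∧ b v = n := by
  obtain ⟨v, ⟨hvm, hvn⟩, hmax⟩ := Set.exists_max_image {v | v ≠ m ∧ b v = n} (T.dist m)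
    (Set.toFinite _) ⟨n, hn.ne', hb1 n hn⟩
  refine ⟨v, ?_, hvn⟩
  have hpar : ∀ w, T.Adj v w → T.dist m v = T.dist m w + 1 := by
    intro w hw
    refine (hT.dist_eq_dist_add_one_of_adj m hw).resolve_right fun h => ?_
    have hwm : w ≠ m := by
      rintro rfl
      simp at h
    have := hmax w ⟨hwm, (hb3 v w hvm hwm hw).symm.trans hvn⟩
    omega
  have : Nontrivial V := ⟨v, m, hvm⟩
  obtain ⟨w, hw⟩ := hT.connected.preconnected.exists_adj_of_nontrivial v
  unfold IsPendant
  rw [Set.ncard_eq_one]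
  refine ⟨w, Set.eq_singleton_iff_unique_mem.2 ⟨hw, fun w' hw' => ?_⟩⟩
  exact parent_unique hT (SimpleGraph.Adj.symm hw') hw.symm (hpar w' hw') (hpar w hw)

/-- Distinct pendant vertices lie in distinct branches. -/
lemma branch_injOn {V : Type*} [Fintype V] [DecidableEq V] {T : SimpleGraph V}
    [DecidableRel T.Adj] (hT : T.IsTree) {m : V} {b : V → V} (hb1 : ∀ n, T.Adj m n → b n = n)
    (hb3 : ∀ v w, v ≠ m → w ≠ m → T.Adj v w → b v = b w) {S : Finset V} (hS : S.card ≤ 3)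
    (hpend : ∀ w, IsPendant T w → w ∈ S) (hm : IsMajor T m) : Set.InjOn b (S : Set V) := by
  have hsub : T.neighborFinset m ⊆ S.image b := by
    intro n hn
    obtain ⟨v, hv, hvn⟩ := exists_pendant_in_branch hT hb1 hb3 ((T.mem_neighborFinset m n).1 hn)
    exact Finset.mem_image.2 ⟨v, hpend v hv, hvn⟩
  have hcard := Finset.card_le_card hsub
  unfold IsMajor at hm
  rw [ncard_neighborSet_eq_degree] at hm
  rw [card_neighborFinset_eq_degree] at hcard
  refine Finset.card_image_iff.1 (le_antisymm Finset.card_image_le ?_)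
  omega

/-- In a tree with three pendant vertices and a major vertex `m`, all other vertices have degree
two: the numbers `deg v - 2` sum to `-2`, of which the pendant vertices contribute `-3`, and `m` at
least `1`. -/
lemma degree_eq_two {V : Type*} [Fintype V] [DecidableEq V] {T : SimpleGraph V}
    [DecidableRel T.Adj] (hT : T.IsTree) {m : V} {S : Finset V} (hS : S.card = 3)
    (hSpend : ∀ w, w ∈ S ↔ IsPendant T w) (hm : IsMajor T m) (v : V) (hvm : v ≠ m)
    (hvS : v ∉ S) : T.degree v = 2 := by
  simp only [IsPendant, IsMajor, ncard_neighborSet_eq_degree] at hSpend hm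
  have : Nontrivial V := ⟨v, m, hvm⟩
  let h : V → ℤ := fun w => (if w = m then 1 else 0) - (if w ∈ S then 1 else 0)
  have hle : ∀ w ∈ Finset.univ, h w ≤ (T.degree w : ℤ) - 2 := by
    intro w _
    have hpos := hT.connected.preconnected.degree_pos_of_nontrivial w
    have hw := hSpend w
    simp only [h]
    by_cases hwm : w = m
    · subst hwm
      split_ifs <;> omega
    · by_cases hwS : w ∈ S
      · simp only [hwm, hwS, if_true, if_false]
        omega
      · have : T.degree w ≠ 1 := fun h => hwS (hw.2 h)
        simp only [hwm, hwS, if_false]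
        omega
  have hsum : ∑ w, h w = ∑ w, ((T.degree w : ℤ) - 2) := by
    have e1 := T.sum_degrees_eq_twice_card_edges
    have e2 := hT.card_edgeFinset
    have e3 : ∑ w, h w = 1 - 3 := by
      simp [h, Finset.sum_sub_distrib, hS]
    rw [e3, Finset.sum_sub_distrib, ← Nat.cast_sum, e1]
    simp only [Finset.sum_const, Finset.card_univ, nsmul_eq_mul]
    push_cast
    omega
  have := (Finset.sum_eq_sum_iff_of_le hle).1 hsum v (Finset.mem_univ v)
  simp only [h, hvm, hvS, if_false] at this
  omega

/-- The eigenvalue equation for `1`, for the function `legValue (d(m, ·))`, at a vertex of degree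
two. -/
lemma sum_legValue_of_degree_two {V : Type*} [Fintype V] [DecidableEq V] {T : SimpleGraph V}
    [DecidableRel T.Adj] (hT : T.IsTree) {m v : V} (hvm : v ≠ m) (hdeg : T.degree v = 2) :
    ∑ w ∈ T.neighborFinset v, legValue (T.dist m w) = legValue (T.dist m v) := by
  obtain ⟨x, y, hxy, hN⟩ := Finset.card_eq_two.1 hdeg
  have hx : T.Adj v x := (T.mem_neighborFinset v x).1 (by simp [hN])
  have hy : T.Adj v y := (T.mem_neighborFinset v y).1 (by simp [hN])
  obtain ⟨p, hp⟩ := hT.connected.exists_walk_length_eq_dist m v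
  have hpnil : ¬ p.Nil := fun h => hvm h.eq.symm
  -- The penultimate vertex of a shortest walk is a neighbour of `v` closer to `m`.
  have hpen : T.Adj v p.penultimate := (p.adj_penultimate hpnil).symm
  have hpd : T.dist m v = T.dist m p.penultimate + 1 := by
    have h1 : T.dist m p.penultimate ≤ p.dropLast.length := dist_le _
    have h2 : p.dropLast.length + 1 = p.length := Walk.length_dropLast_add_one hpnil
    rcases hT.dist_eq_dist_add_one_of_adj m hpen with h | h <;> omega
  have hmem : p.penultimate = x ∨ p.penultimate = y := by
    have := (T.mem_neighborFinset v _).2 hpen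
    simpa [hN] using this
  have key : ∀ x y, x ≠ y → T.Adj v x → T.Adj v y → T.dist m v = T.dist m x + 1 →
      legValue (T.dist m x) + legValue (T.dist m y) = legValue (T.dist m v) := by
    intro x y hxy hx hy hd
    rcases hT.dist_eq_dist_add_one_of_adj m hy with h | h
    · exact absurd (parent_unique hT hx.symm hy.symm hd h) hxy
    · rw [h, hd, legValue]
      ring
  rw [hN, Finset.sum_pair hxy]
  rcases hmem with h | h
  · exact key x y hxy hx hy (h ▸ hpd)
  · rw [add_comm]
    exact key y x hxy.symm hy hx (h ▸ hpd)

/-- The eigenvalue equation for `1` at a pendant vertex at distance `≡ 1 (mod 3)` from `m`. -/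
lemma sum_legValue_of_degree_one {V : Type*} [Fintype V] [DecidableEq V] {T : SimpleGraph V}
    [DecidableRel T.Adj] (hT : T.IsTree) {m v : V} (hdeg : T.degree v = 1)
    (hd : T.dist m v % 3 = 1) (hvm : v ≠ m) :
    ∑ w ∈ T.neighborFinset v, legValue (T.dist m w) = 0 := by
  obtain ⟨x, hN⟩ := Finset.card_eq_one.1 hdeg
  obtain ⟨p, hp⟩ := hT.connected.exists_walk_length_eq_dist m v
  have hpnil : ¬ p.Nil := fun h => hvm h.eq.symm
  have hpen : T.Adj v p.penultimate := (p.adj_penultimate hpnil).symm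
  have hpd : T.dist m v = T.dist m p.penultimate + 1 := by
    have h1 : T.dist m p.penultimate ≤ p.dropLast.length := dist_le _
    have h2 : p.dropLast.length + 1 = p.length := Walk.length_dropLast_add_one hpnil
    rcases hT.dist_eq_dist_add_one_of_adj m hpen with h | h <;> omega
  have hmem : p.penultimate = x := by
    have := (T.mem_neighborFinset v _).2 hpen
    simpa [hN] using this
  rw [hN, Finset.sum_singleton, ← hmem,
    show T.dist m p.penultimate = 3 * (T.dist m p.penultimate / 3) by omega, legValue_three_mul]

/-- Let `T` be a tree with exactly three pendant vertices
`u₁, u₂, u₃` and a major vertex `m` such that `d(u₁,m) ≡ 1` and `d(u₂,m) ≡ 1 (mod 3)`.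
Then `1` is an eigenvalue of the Laplacian matrix `L(T)`. -/
theorem stmt_12 {V : Type*} [Finite V] (T : SimpleGraph V) (hT : T.IsTree)
    (u₁ u₂ u₃ m : V) (hdist : List.Pairwise (· ≠ ·) [u₁, u₂, u₃])
    (h₁ : IsPendant T u₁) (h₂ : IsPendant T u₂) (h₃ : IsPendant T u₃)
    (hpend : ∀ w : V, IsPendant T w → w ∈ ({u₁, u₂, u₃} : Set V))
    (hm : IsMajor T m)
    (hd₁ : T.dist u₁ m % 3 = 1) (hd₂ : T.dist u₂ m % 3 = 1) :
    HasLapEigen T 1 := by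
  unfold HasLapEigen lapMat
  letI := Fintype.ofFinite V
  letI := Classical.decEq V
  letI : DecidableRel T.Adj := Classical.decRel _
  have hne : (u₁ ≠ u₂ ∧ u₁ ≠ u₃) ∧ u₂ ≠ u₃ := by simpa using hdist
  obtain ⟨⟨h12, h13⟩, h23⟩ := hne
  let S : Finset V := {u₁, u₂, u₃}
  have hScard : S.card = 3 := Finset.card_eq_three.2 ⟨u₁, u₂, u₃, h12, h13, h23, rfl⟩
  have hS : ∀ w, w ∈ S ↔ IsPendant T w := by
    intro w
    refine ⟨fun hw => ?_, fun hw => by simpa [S] using hpend w hw⟩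
    have : w = u₁ ∨ w = u₂ ∨ w = u₃ := by simpa [S] using hw
    rcases this with rfl | rfl | rfl <;> assumption
  have hpm : ∀ w, IsPendant T w → w ≠ m := by
    rintro w hw rfl
    unfold IsPendant at hw
    unfold IsMajor at hm
    omega
  obtain ⟨b, hb1, hb2, hb3⟩ := exists_branch hT m
  have hinj := branch_injOn hT hb1 hb3 hScard.le (fun w hw => (hS w).2 hw) hm
  have hu₁ : u₁ ∈ (S : Set V) := by simp [S]
  have hu₂ : u₂ ∈ (S : Set V) := by simp [S]
  have hu₃ : u₃ ∈ (S : Set V) := by simp [S]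
  have hb12 : b u₁ ≠ b u₂ := fun h => h12 (hinj hu₁ hu₂ h)
  have hb13 : b u₁ ≠ b u₃ := fun h => h13 (hinj hu₁ hu₃ h)
  have hb23 : b u₂ ≠ b u₃ := fun h => h23 (hinj hu₂ hu₃ h)
  have ha₁ := hb2 u₁ (hpm _ h₁)
  have ha₂ := hb2 u₂ (hpm _ h₂)
  -- The sign of the eigenvector on the branch with root `n`.
  let s : V → ℝ := fun n => (if n = b u₁ then 1 else 0) - (if n = b u₂ then 1 else 0)
  refine ⟨fun v => s (b v) * legValue (T.dist m v), fun h0 => ?_, ?_⟩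
  · have := congrFun h0 (b u₁)
    simp only [hb1 _ ha₁, dist_eq_one_iff_adj.2 ha₁, s, if_true, hb12, if_false, legValue,
      Pi.zero_apply] at this
    norm_num at this
  ext v
  rw [lapMatrix_mulVec_apply]
  simp only [Pi.smul_apply, smul_eq_mul, one_mul]
  by_cases hvm : v = m
  · subst hvm
    have : ∀ n ∈ T.neighborFinset v, s (b n) * legValue (T.dist v n) = s n := by
      intro n hn
      have hn' := (T.mem_neighborFinset v n).1 hn
      rw [hb1 n hn', dist_eq_one_iff_adj.2 hn', legValue, mul_one]
    rw [Finset.sum_congr rfl this]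
    simp [s, legValue, Finset.sum_sub_distrib, ha₁, ha₂]
  · -- At the neighbour `m`, if present, the sign is irrelevant because `legValue 0 = 0`.
    have : ∀ w ∈ T.neighborFinset v,
        s (b w) * legValue (T.dist m w) = s (b v) * legValue (T.dist m w) := by
      intro w hw
      by_cases hwm : w = m
      · subst hwm
        simp [legValue]
      · rw [hb3 v w hvm hwm ((T.mem_neighborFinset v w).1 hw)]
    rw [Finset.sum_congr rfl this, ← Finset.mul_sum]
    by_cases hvS : v ∈ S
    · have hvp := (hS v).1 hvS
      unfold IsPendant at hvp
      rw [ncard_neighborSet_eq_degree] at hvp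
      have hcases : v = u₁ ∨ v = u₂ ∨ v = u₃ := by simpa [S] using hvS
      have hdm : v = u₃ ∨ T.dist m v % 3 = 1 := by
        rcases hcases with rfl | rfl | rfl
        · exact Or.inr (by rwa [dist_comm])
        · exact Or.inr (by rwa [dist_comm])
        · exact Or.inl rfl
      rcases hdm with rfl | hdm
      · simp [s, hb13.symm, hb23.symm]
      · rw [sum_legValue_of_degree_one hT hvp hdm hvm, hvp]
        simp
    · have hdeg := degree_eq_two hT hScard hS hm v hvm hvS
      rw [sum_legValue_of_degree_two hT hvm hdeg, hdeg]
      push_cast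
      ring
end

section
/- Let P_{u,w} be a path graph with pendant vertices (endpoints) u and w, and let v be a vertex of P_{u,w} such that d(u,v) ≡ 1 mod 3 and d(v,w) ≡ 1 mod 3. Then 1 is an eigenvalue of the Laplacian matrix L(P_{u,w}), and there exists an eigenvector y corresponding to the eigenvalue 1 such that y_v = 0 and y_u ≠ 0. -/
/-!
The eigenvector is explicit. The sequence `1, 0, -1, -1, 0, 1, ...` of period six, given by
`f 0 = 1`, `f 1 = 0`, `f (k + 2) = f (k + 1) - f k`, vanishes exactly at the indices `≡ 1 (mod 3)`,
and `y x = f (d(u, x))` is the required vector.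

A geodesic from `u` to `w` exhausts the graph: its endpoints have degree one, its inner vertices
have degree at most two, so all neighbours of its vertices lie on it (`geodesic_neighborSet_zero`,
`geodesic_neighborSet_length`, `geodesic_neighborSet_inner`), and `G` is connected. Hence `v` lies on
it and its length is `n = d(u, v) + d(v, w) ≡ 2 (mod 3)`. The equation `L y = y` at an inner vertex
is the recurrence `2 f k - f (k - 1) - f (k + 1) = f k`; at `u` it reads `f 1 = 0`, and at `w` it
reads `f (n - 1) = 0`, which holds because `n - 1 ≡ 1 (mod 3)`.
-/

open SimpleGraph Matrix

variable {V : Type*}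

/-- The sequence `1, 0, -1, -1, 0, 1, ...` of period six; its value at the distance from `u` is the
entry of the eigenvector. -/
def pathSeq : ℕ → ℝ
  | 0 => 1
  | 1 => 0
  | k + 2 => pathSeq (k + 1) - pathSeq k

lemma pathSeq_add_three (k : ℕ) : pathSeq (k + 3) = -pathSeq k := by
  have h1 : pathSeq (k + 3) = pathSeq (k + 2) - pathSeq (k + 1) := rfl
  have h2 : pathSeq (k + 2) = pathSeq (k + 1) - pathSeq k := rfl
  rw [h1, h2]; ring

lemma pathSeq_eq_zero {k : ℕ} (hk : k % 3 = 1) : pathSeq k = 0 := by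
  obtain ⟨m, rfl⟩ : ∃ m, k = 3 * m + 1 := ⟨k / 3, by omega⟩
  clear hk
  induction m with
  | zero => rfl
  | succ m ih =>
    have h := pathSeq_add_three (3 * m + 1)
    rw [ih, neg_zero] at h
    exact h

lemma geodesic_dist_getVert {G : SimpleGraph V} (hc : G.Connected) {u w : V} (p : G.Walk u w)
    (hp : p.length = G.dist u w) {i : ℕ} (hi : i ≤ p.length) :
    G.dist u (p.getVert i) = i ∧ G.dist (p.getVert i) w = p.length - i := by
  have h1 := SimpleGraph.dist_le (p.take i)
  have h2 := SimpleGraph.dist_le (p.drop i)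
  have h3 := hc.dist_triangle (u := u) (v := p.getVert i) (w := w)
  rw [Walk.take_length] at h1
  rw [Walk.drop_length] at h2
  omega

lemma geodesic_neighborSet_zero [Fintype V] {G : SimpleGraph V} {u w : V} (p : G.Walk u w)
    (hu : IsPendant G u) (hn : 0 < p.length) : G.neighborSet u = {p.getVert 1} := by
  have h := p.adj_getVert_succ hn
  rw [Walk.getVert_zero] at h
  refine (Set.eq_of_subset_of_ncard_le ?_ ?_ (Set.toFinite _)).symm
  · simpa using h
  · rw [hu, Set.ncard_singleton]

lemma geodesic_neighborSet_length [Fintype V] {G : SimpleGraph V} {u w : V} (p : G.Walk u w)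
    (hw : IsPendant G w) (hn : 0 < p.length) :
    G.neighborSet w = {p.getVert (p.length - 1)} := by
  have h := p.adj_getVert_succ (i := p.length - 1) (by omega)
  rw [show p.length - 1 + 1 = p.length by omega, Walk.getVert_length] at h
  refine (Set.eq_of_subset_of_ncard_le ?_ ?_ (Set.toFinite _)).symm
  · simpa using h.symm
  · rw [hw, Set.ncard_singleton]

lemma geodesic_getVert_ne {G : SimpleGraph V} (hc : G.Connected) {u w : V} (p : G.Walk u w)
    (hp : p.length = G.dist u w) {k : ℕ} (hk : k + 2 ≤ p.length) :
    p.getVert k ≠ p.getVert (k + 2) := by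
  intro h
  have h1 := (geodesic_dist_getVert hc p hp (i := k) (by omega)).1
  have h2 := (geodesic_dist_getVert hc p hp hk).1
  rw [h] at h1
  omega

lemma geodesic_neighborSet_inner [Fintype V] {G : SimpleGraph V} (hc : G.Connected) {u w : V}
    (p : G.Walk u w) (hp : p.length = G.dist u w) (hpath : ∀ z : V, (G.neighborSet z).ncard ≤ 2)
    {k : ℕ} (hk : k + 2 ≤ p.length) :
    G.neighborSet (p.getVert (k + 1)) = {p.getVert k, p.getVert (k + 2)} := by
  have h1 := p.adj_getVert_succ (i := k) (by omega)
  have h2 := p.adj_getVert_succ (i := k + 1) (by omega)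
  refine (Set.eq_of_subset_of_ncard_le ?_ ?_ (Set.toFinite _)).symm
  · rintro x (rfl | rfl)
    · exact h1.symm
    · exact h2
  · rw [Set.ncard_pair (geodesic_getVert_ne hc p hp hk)]
    exact hpath _

lemma geodesic_exhausts [Fintype V] {G : SimpleGraph V} (hc : G.Connected) {u w : V}
    (p : G.Walk u w) (hp : p.length = G.dist u w) (hpath : ∀ z : V, (G.neighborSet z).ncard ≤ 2)
    (hu : IsPendant G u) (hw : IsPendant G w) (hn : 0 < p.length) (x : V) :
    ∃ i ≤ p.length, x = p.getVert i := by
  -- The vertex set of the geodesic is closed under adjacency.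
  have step : ∀ a b : V, G.Adj a b → (∃ i ≤ p.length, a = p.getVert i) →
      ∃ i ≤ p.length, b = p.getVert i := by
    rintro a b hab ⟨i, hi, rfl⟩
    have hb : b ∈ G.neighborSet (p.getVert i) := hab
    rcases i with _ | k
    · rw [Walk.getVert_zero, geodesic_neighborSet_zero p hu hn] at hb
      exact ⟨1, hn, hb⟩
    · rcases hi.eq_or_lt with h | h
      · rw [h, Walk.getVert_length, geodesic_neighborSet_length p hw hn] at hb
        exact ⟨p.length - 1, by omega, hb⟩
      · rw [geodesic_neighborSet_inner hc p hp hpath h] at hb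
        rcases hb with hb | hb
        · exact ⟨k, by omega, hb⟩
        · exact ⟨k + 2, h, hb⟩
  obtain ⟨q⟩ := hc.preconnected u x
  have key : ∀ {a b : V} (q : G.Walk a b), (∃ i ≤ p.length, a = p.getVert i) →
      ∃ i ≤ p.length, b = p.getVert i := by
    intro a b q
    induction q with
    | nil => exact id
    | cons hadj _ ih => exact fun h => ih (step _ _ hadj h)
  exact key q ⟨0, Nat.zero_le _, p.getVert_zero.symm⟩

lemma lapMat_mulVec_of_neighborSet_eq_singleton [Fintype V] (G : SimpleGraph V) (y : V → ℝ)
    {x a : V} (h : G.neighborSet x = {a}) : (lapMat G *ᵥ y) x = y x - y a := by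
  classical
  have hf : G.neighborFinset x = {a} := by
    ext z
    rw [mem_neighborFinset, ← mem_neighborSet, h]
    simp
  have : (G.lapMatrix ℝ *ᵥ y) x = y x - y a := by
    rw [lapMatrix_mulVec_apply, ← card_neighborFinset_eq_degree, hf]
    simp
  unfold lapMat
  convert this

lemma lapMat_mulVec_of_neighborSet_eq_pair [Fintype V] (G : SimpleGraph V) (y : V → ℝ)
    {x a b : V} (hab : a ≠ b) (h : G.neighborSet x = {a, b}) :
    (lapMat G *ᵥ y) x = 2 * y x - (y a + y b) := by
  classical
  have hf : G.neighborFinset x = {a, b} := by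
    ext z
    rw [mem_neighborFinset, ← mem_neighborSet, h]
    simp
  have : (G.lapMatrix ℝ *ᵥ y) x = 2 * y x - (y a + y b) := by
    rw [lapMatrix_mulVec_apply, ← card_neighborFinset_eq_degree, hf, Finset.sum_pair hab,
      Finset.card_pair hab]
    simp
  unfold lapMat
  convert this

/-- Let `P_{u,w}` be a path graph with pendant vertices (endpoints)
`u` and `w`, and let `v` be a vertex of `P_{u,w}` such that `d(u,v) ≡ 1 (mod 3)` and
`d(v,w) ≡ 1 (mod 3)`. Then `1` is an eigenvalue of the Laplacian matrix `L(P_{u,w})`,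
and there exists an eigenvector `y` for the eigenvalue `1` with `y v = 0` and
`y u ≠ 0`. -/
theorem stmt_15 {V : Type*} [Fintype V] (G : SimpleGraph V) (hG : G.IsTree)
    (hpath : ∀ z : V, (G.neighborSet z).ncard ≤ 2)
    (u w v : V) (hu : IsPendant G u) (hw : IsPendant G w) (huw : u ≠ w)
    (hd₁ : G.dist u v % 3 = 1) (hd₂ : G.dist v w % 3 = 1) :
    ∃ y : V → ℝ, y ≠ 0 ∧ lapMat G *ᵥ y = y ∧ y v = 0 ∧ y u ≠ 0 := by
  have hc := hG.connected
  obtain ⟨p, hp⟩ := hc.exists_walk_length_eq_dist u w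
  have hn : 0 < p.length := hp ▸ hc.pos_dist_of_ne huw
  have hdist : ∀ {i : ℕ}, i ≤ p.length → G.dist u (p.getVert i) = i :=
    fun hi => (geodesic_dist_getVert hc p hp hi).1
  have hmod : p.length % 3 = 2 := by
    obtain ⟨i, hi, rfl⟩ := geodesic_exhausts hc p hp hpath hu hw hn v
    obtain ⟨h1, h2⟩ := geodesic_dist_getVert hc p hp hi
    omega
  have hyu : pathSeq (G.dist u u) ≠ 0 := by simp [pathSeq]
  refine ⟨fun x => pathSeq (G.dist u x), fun h => hyu (congrFun h u), ?_, pathSeq_eq_zero hd₁, hyu⟩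
  funext x
  obtain ⟨i, hi, rfl⟩ := geodesic_exhausts hc p hp hpath hu hw hn x
  rcases i with _ | k
  · rw [Walk.getVert_zero, lapMat_mulVec_of_neighborSet_eq_singleton G _
      (geodesic_neighborSet_zero p hu hn), hdist (i := 1) hn, pathSeq_eq_zero (k := 1) rfl, sub_zero]
  · rcases hi.eq_or_lt with h | h
    · rw [h, Walk.getVert_length, lapMat_mulVec_of_neighborSet_eq_singleton G _
        (geodesic_neighborSet_length p hw hn), hdist (by omega),
        pathSeq_eq_zero (k := p.length - 1) (by omega), sub_zero]
    · rw [lapMat_mulVec_of_neighborSet_eq_pair G _ (geodesic_getVert_ne hc p hp h)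
        (geodesic_neighborSet_inner hc p hp hpath h), hdist hi, hdist (i := k) (by omega), hdist h]
      have hrec : pathSeq (k + 2) = pathSeq (k + 1) - pathSeq k := rfl
      rw [hrec]
      ring
end

section
/- Let T be a tree, let v1 be a pendant vertex of T, and let m be a major vertex of T such that d(v1,m) is minimal among all major vertices of T. Let v1 ~ v2 ~ … ~ v_{k+1} = m be the unique path in T from v1 to m. If x is an eigenvector of the signless Laplacian matrix Q(T) corresponding to the eigenvalue 1 with x_{v1} ≠ 0, then, setting c = x_{v1} ≠ 0, for every 1 ≤ i ≤ k+1: x_{v_i} = c if i ≡ 1 mod 3, x_{v_i} = 0 if i ≡ 2 mod 3, and x_{v_i} = −c if i ≡ 0 mod 3. -/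
/-!
Row `v` of `Q(T) x = x` reads `deg v * x v + ∑_{w ~ v} x w = x v`. At the pendant vertex this
forces `x` to vanish on its neighbour. The interior vertices of the path are strictly closer to
`v₁` than `m`, so by minimality none of them is major and each has exactly its two path neighbours;
the row then becomes the recurrence `x_{i+2} = -x_{i+1} - x_i`, whose solution with initial values
`c, 0` is the 3-periodic sequence `c, 0, -c, …`.
-/

open SimpleGraph Matrix

variable {V : Type*}

/-- Row `v` of the eigenvalue equation `Q(G) x = x`, for any set `s` enumerating the neighbours
of `v`. -/
lemma signless_row {V : Type*} [Fintype V] (G : SimpleGraph V) (x : V → ℝ)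
    (heig : signlessLapMat G *ᵥ x = x) (v : V) (s : Finset V)
    (hs : G.neighborSet v = (s : Set V)) :
    (s.card : ℝ) * x v + ∑ w ∈ s, x w = x v := by
  classical
  have h := congrFun heig v
  have hs' : G.neighborFinset v = s := by
    ext w
    rw [SimpleGraph.mem_neighborFinset, ← SimpleGraph.mem_neighborSet, hs, Finset.mem_coe]
  have hd : G.degree v = s.card := by rw [← hs', SimpleGraph.card_neighborFinset_eq_degree]
  have hQ : signlessLapMat G = G.degMatrix ℝ + G.adjMatrix ℝ := by
    unfold signlessLapMat
    congr!
  rw [hQ, Matrix.add_mulVec, Pi.add_apply, SimpleGraph.adjMatrix_mulVec_apply,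
    SimpleGraph.degMatrix_mulVec_apply, hs', hd] at h
  exact h

/-- Let `T` be a tree, `v₁` a pendant vertex and `m` a major vertex
of `T` with `d(v₁,m)` minimal among all major vertices. Let
`v₁ = p.getVert 0 ~ p.getVert 1 ~ ⋯ ~ p.getVert p.length = m` be the unique path from
`v₁` to `m` (so `p.getVert (i-1)` is the vertex `v_i` of the paper, `1 ≤ i ≤ k+1`).
If `x` is an eigenvector of the signless Laplacian `Q(T)` for the eigenvalue `1` with
`c := x v₁ ≠ 0`, then along the path `x` takes the values
`c, 0, -c, c, 0, -c, …` (i.e. `x v_i = c` if `i ≡ 1`, `0` if `i ≡ 2`, `-c` if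
`i ≡ 0 (mod 3)`). -/
theorem stmt_16 {V : Type*} [Fintype V] (T : SimpleGraph V) (hT : T.IsTree)
    (v₁ m : V) (hv₁ : IsPendant T v₁) (hm : IsMajor T m)
    (hmin : ∀ m' : V, IsMajor T m' → T.dist v₁ m ≤ T.dist v₁ m')
    (p : T.Walk v₁ m) (hp : p.IsPath)
    (x : V → ℝ) (hx : x ≠ 0) (heig : signlessLapMat T *ᵥ x = x)
    (hc : x v₁ ≠ 0) :
    ∀ i ≤ p.length,
      x (p.getVert i) =
        if i % 3 = 0 then x v₁ else if i % 3 = 1 then 0 else -x v₁ := by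
  classical
  have hlen : p.length = T.dist v₁ m := by
    obtain ⟨q, hq, hql⟩ := hT.connected.exists_path_of_dist v₁ m
    have : p = q := congrArg Subtype.val
      ((hT.isAcyclic.subsingleton_path v₁ m).elim ⟨p, hp⟩ ⟨q, hq⟩)
    rw [this, hql]
  have hone : 1 ≤ p.length → x (p.getVert 1) = 0 := by
    intro h1
    obtain ⟨w, hw⟩ := Set.ncard_eq_one.mp hv₁
    have hadj : T.Adj v₁ (p.getVert 1) := by
      simpa using p.adj_getVert_succ (i := 0) (by omega)
    have hmem : p.getVert 1 ∈ T.neighborSet v₁ := hadj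
    rw [hw, Set.mem_singleton_iff] at hmem
    have hrow := signless_row T x heig v₁ {w} (by simpa using hw)
    simp at hrow
    rw [hmem, hrow]
  have hrec : ∀ i, i + 2 ≤ p.length →
      x (p.getVert (i + 2)) = -x (p.getVert (i + 1)) - x (p.getVert i) := by
    intro i hi
    have hA : T.Adj (p.getVert (i + 1)) (p.getVert i) :=
      (p.adj_getVert_succ (i := i) (by omega)).symm
    have hB : T.Adj (p.getVert (i + 1)) (p.getVert (i + 2)) :=
      p.adj_getVert_succ (i := i + 1) (by omega)
    have hne : p.getVert i ≠ p.getVert (i + 2) := by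
      intro h
      have := hp.getVert_injOn (show i ≤ p.length by omega) (show i + 2 ≤ p.length by omega) h
      omega
    have hdist : T.dist v₁ (p.getVert (i + 1)) ≤ i + 1 := by
      refine (SimpleGraph.dist_le (p.take (i + 1))).trans ?_
      rw [SimpleGraph.Walk.take_length]
      exact min_le_left _ _
    have hnot : ¬ IsMajor T (p.getVert (i + 1)) := by
      intro h
      have := hmin _ h
      omega
    have hnbr : T.neighborSet (p.getVert (i + 1)) =
        (({p.getVert i, p.getVert (i + 2)} : Finset V) : Set V) := by
      symm
      refine Set.eq_of_subset_of_ncard_le ?_ ?_ (Set.toFinite _)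
      · intro w hw
        simp only [Finset.coe_insert, Finset.coe_singleton, Set.mem_insert_iff,
          Set.mem_singleton_iff] at hw
        rcases hw with rfl | rfl
        exacts [hA, hB]
      · rw [Set.ncard_coe_finset, Finset.card_pair hne]
        unfold IsMajor at hnot
        omega
    have hrow := signless_row T x heig _ _ hnbr
    rw [Finset.card_pair hne, Finset.sum_pair hne] at hrow
    push_cast at hrow
    linarith
  intro i
  induction i using Nat.strong_induction_on with
  | _ i ih =>
    intro hi
    match i, ih, hi with
    | 0, _, _ => simp
    | 1, _, hi => simpa using hone hi
    | j + 2, ih, hi =>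
      rw [hrec j hi, ih (j + 1) (by omega) (by omega), ih j (by omega) (by omega)]
      have h3 : j % 3 = 0 ∨ j % 3 = 1 ∨ j % 3 = 2 := by omega
      rcases h3 with h | h | h <;> simp [Nat.add_mod, h]
end

section
/- Let T be a tree such that d(u1,u2) ≡ 2 mod 3 for all distinct pendant vertices u1, u2 of T (i.e., T ∈ Q), and let v be a vertex of T such that d(v,u) ≡ 1 mod 3 for some pendant vertex u of T. Then d(v,w) ≡ 1 mod 3 for every pendant vertex w of T (i.e., v is a node of T). -/
/-!
If `v` lies on the path from `u` to a pendant vertex `x`, then `d(v,x) = d(u,x) - d(u,v)`, which is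
`≡ 2 - 1 = 1 (mod 3)` as soon as `u` is pendant and `d(v,u) ≡ 1`. Such an `x` always exists: take a
vertex farthest from `u` among those whose path from `u` passes through `v`
(`exists_isPendant_onPath`). For any further pendant vertex `w`, the paths `u–w` and `w–x` together
cover the path `u–x`, so `v` lies on one of them (`onPath_or_onPath`); subtracting along that path
gives `d(v,w) ≡ 2 - 1 = 1 (mod 3)`.
-/

open SimpleGraph Matrix

variable {V : Type*}

/-- A vertex on some geodesic walk splits the distance between its ends additively. -/
lemma onPath_of_mem_support {G : SimpleGraph V} {u w v : V} (hG : G.Connected)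
    (p : G.Walk u w) (hp : p.length = G.dist u w) (hv : v ∈ p.support) : OnPath G u w v := by
  classical
  have h₁ := dist_le (p.takeUntil v hv)
  have h₂ := dist_le (p.dropUntil v hv)
  have h₃ := congrArg Walk.length (p.take_spec hv)
  rw [Walk.length_append] at h₃
  have h₄ := hG.dist_triangle (u := u) (v := v) (w := w)
  unfold OnPath
  omega

/-- In a tree, the path between `u` and `x` is covered by the paths `u–w` and `w–x`: shortening
their concatenation to a path gives the unique path from `u` to `x`. -/
lemma onPath_or_onPath {G : SimpleGraph V} (hG : G.IsTree) {u x v : V} (h : OnPath G u x v)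
    (w : V) : OnPath G u w v ∨ OnPath G w x v := by
  classical
  obtain ⟨a, ha⟩ := hG.connected.exists_walk_length_eq_dist u v
  obtain ⟨b, hb⟩ := hG.connected.exists_walk_length_eq_dist v x
  obtain ⟨p, hp⟩ := hG.connected.exists_walk_length_eq_dist u w
  obtain ⟨q, hq⟩ := hG.connected.exists_walk_length_eq_dist w x
  have hab : (a.append b).IsPath := by
    apply Walk.isPath_of_length_eq_dist
    rw [Walk.length_append, ha, hb]
    exact h
  have heq : a.append b = (p.append q).bypass :=
    (hG.existsUnique_path u x).unique hab (p.append q).bypass_isPath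
  have hv : v ∈ (p.append q).support := by
    apply Walk.support_bypass_subset_support
    rw [← heq, Walk.mem_support_append_iff]
    exact Or.inl a.end_mem_support
  rw [Walk.mem_support_append_iff] at hv
  exact hv.imp (onPath_of_mem_support hG.connected p hp) (onPath_of_mem_support hG.connected q hq)

/-- In a tree, a vertex has at most one neighbor closer to a given vertex `u`, so a vertex `x ≠ u`
all of whose neighbors are closer to `u` is pendant. -/
lemma isPendant_of_forall_adj {G : SimpleGraph V} (hG : G.IsTree) {u x : V} (hne : u ≠ x)
    (h : ∀ y, G.Adj x y → G.dist u x = G.dist u y + 1) : IsPendant G x := by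
  obtain ⟨p, hp, -⟩ := hG.connected.exists_path_of_dist u x
  refine Set.ncard_eq_one.mpr ⟨p.penultimate, ?_⟩
  ext y
  simp only [mem_neighborSet, Set.mem_singleton_iff]
  refine ⟨fun hy => ?_, ?_⟩
  · refine hG.isAcyclic.eq_penultimate_of_adj_end hp hy ?_
    obtain ⟨q, hq⟩ := hG.connected.exists_walk_length_eq_dist u y
    have hpath : (q.concat hy.symm).IsPath := by
      apply Walk.isPath_of_length_eq_dist
      rw [Walk.length_concat, hq, h y hy]
    rw [(hG.existsUnique_path u x).unique hp hpath]
    exact q.support_subset_support_concat _ q.end_mem_support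
  · rintro rfl
    exact (p.adj_penultimate (Walk.not_nil_of_ne hne)).symm

/-- In a finite tree, the path from `u` to `v ≠ u` extends to a path ending at a pendant vertex. -/
lemma exists_isPendant_onPath [Finite V] {G : SimpleGraph V} (hG : G.IsTree) {u v : V}
    (hne : u ≠ v) : ∃ x, IsPendant G x ∧ u ≠ x ∧ OnPath G u x v := by
  obtain ⟨x, hx, hmax⟩ := Set.exists_max_image {x | OnPath G u x v} (G.dist u) (Set.toFinite _)
    ⟨v, by simp [OnPath]⟩
  have hx' : G.dist u v + G.dist v x = G.dist u x := hx
  have hux : u ≠ x := by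
    rintro rfl
    have := hG.connected.pos_dist_of_ne hne
    rw [dist_self] at hx'
    omega
  refine ⟨x, isPendant_of_forall_adj hG hux fun y hy => ?_, hux, hx⟩
  refine (hG.dist_eq_dist_add_one_of_adj u hy).resolve_right fun hfar => ?_
  -- A neighbor `y` farther from `u` than `x` would also have `v` on its path, against maximality.
  have h₁ := hG.connected.dist_triangle (u := u) (v := v) (w := y)
  have h₂ := hG.connected.dist_triangle (u := v) (v := x) (w := y)
  have h₃ := dist_eq_one_iff_adj.mpr hy
  have := hmax y (show G.dist u v + G.dist v y = G.dist u y by omega)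
  omega

/-- Let `T` be a tree such that `d(u₁,u₂) ≡ 2 (mod 3)` for all
distinct pendant vertices `u₁, u₂` of `T` (i.e. `T ∈ 𝒬`), and let `v` be a vertex of
`T` such that `d(v,u) ≡ 1 (mod 3)` for some pendant vertex `u` of `T`. Then
`d(v,w) ≡ 1 (mod 3)` for every pendant vertex `w` of `T` (i.e. `v` is a node). -/
theorem stmt_17 {V : Type*} [Finite V] (T : SimpleGraph V) (hT : T.IsTree)
    (hQ : ∀ a b : V, IsPendant T a → IsPendant T b → a ≠ b → T.dist a b % 3 = 2)
    (v u : V) (hu : IsPendant T u) (hvu : T.dist v u % 3 = 1) :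
    ∀ w : V, IsPendant T w → T.dist v w % 3 = 1 := by
  intro w hw
  have huv : u ≠ v := by
    rintro rfl
    simp at hvu
  obtain ⟨x, hx, hux, hv⟩ := exists_isPendant_onPath hT huv
  have h₁ := hQ u x hu hx hux
  have h₂ : T.dist u v + T.dist v x = T.dist u x := hv
  rw [dist_comm] at hvu
  rcases eq_or_ne u w with rfl | huw
  · rwa [dist_comm]
  rcases eq_or_ne w x with rfl | hwx
  · omega
  have h₃ := hQ u w hu hw huw
  have h₄ := hQ w x hw hx hwx
  have h₅ : T.dist w v = T.dist v w := dist_comm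
  rcases onPath_or_onPath hT hv w with h | h <;> unfold OnPath at h <;> omega
end

section
/- Let T be a tree with at least one major vertex. Then the following are equivalent: (i) d(u,w) ≡ 2 mod 3 for all distinct pendant vertices u, w of T; (ii) d(u,θ) ≡ 1 mod 3 for every pendant vertex u and every major vertex θ of T. -/
/-!
Everything is phrased through distances. For a neighbour `a` of `θ`, the branch at `θ` through `a`
is the set of `w` with `d(w, a) + 1 = d(w, θ)`. Distinct branches at `θ` are disjoint
(`closer_unique`), each contains a pendant vertex (`exists_pendant_in_branch`), and `θ` lies
between vertices of different branches (`dist_eq_add_of_branch`).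

If (i) holds, `u` is pendant and `θ` is major, choose pendant vertices `w`, `z` in two branches
at `θ` not containing `u`. The three pairwise sums of `d(u, θ)`, `d(w, θ)`, `d(z, θ)` are all
`2` modulo `3`, which forces `d(u, θ) ≡ 1`. Conversely, some major vertex `x` lies on the path
between two given distinct pendant vertices `u`, `w` (`exists_major_onPath`), so (ii) gives
`d(u, w) = d(u, x) + d(x, w) ≡ 2`.
-/

open SimpleGraph Matrix

variable {V : Type*}

/-- In a tree, at most one neighbour of `w` is closer to `u` than `w` is: each such neighbour
starts a shortest path from `w` to `u`, and paths in a tree are unique. -/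
lemma closer_unique {T : SimpleGraph V} (hT : T.IsTree) {u w p q : V} (hp : T.Adj w p)
    (hq : T.Adj w q) (hup : T.dist u p + 1 = T.dist u w) (huq : T.dist u q + 1 = T.dist u w) :
    p = q := by
  obtain ⟨P, hP⟩ := hT.1.exists_walk_length_eq_dist p u
  obtain ⟨Q, hQ⟩ := hT.1.exists_walk_length_eq_dist q u
  have hP' : (Walk.cons hp P).IsPath := Walk.isPath_of_length_eq_dist _ (by
    rw [Walk.length_cons, hP, T.dist_comm, hup, T.dist_comm])
  have hQ' : (Walk.cons hq Q).IsPath := Walk.isPath_of_length_eq_dist _ (by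
    rw [Walk.length_cons, hQ, T.dist_comm, huq, T.dist_comm])
  have := congrArg (fun W => W.snd) ((hT.existsUnique_path w u).unique hP' hQ')
  simpa using this

lemma exists_adj_closer {T : SimpleGraph V} (hT : T.IsTree) {u w : V} (huw : u ≠ w) :
    ∃ p, T.Adj w p ∧ T.dist u p + 1 = T.dist u w := by
  obtain ⟨P, hP⟩ := hT.1.exists_walk_length_eq_dist w u
  cases P with
  | nil => exact absurd rfl huw
  | cons h P =>
    rename_i p
    refine ⟨p, h, ?_⟩
    have h1 := T.dist_le P
    have h2 := hT.dist_eq_dist_add_one_of_adj u h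
    rw [Walk.length_cons] at hP
    rw [T.dist_comm] at h1 hP
    omega

/-- If `u` lies in the branch at `θ` through the neighbour `a` and `w` does not, then `θ` lies
between `u` and `w`. The induction on `d(θ, w)` shows that, beyond `θ`, each step away from `θ`
is also a step away from `u`. -/
lemma dist_eq_add_of_branch {T : SimpleGraph V} (hT : T.IsTree) {u θ a : V} (ha : T.Adj θ a)
    (hu : T.dist u a + 1 = T.dist u θ) (w : V) (hw : T.dist w a + 1 ≠ T.dist w θ) :
    T.dist u w = T.dist u θ + T.dist θ w := by
  induction hn : T.dist θ w generalizing w with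
  | zero =>
    rw [(hT.1.dist_eq_zero_iff).1 hn, add_zero]
  | succ n ih =>
    have hne : θ ≠ w := by
      rintro rfl
      simp at hn
    obtain ⟨p, hp, hθp⟩ := exists_adj_closer hT hne
    have hpn : T.dist p a + 1 ≠ T.dist p θ := by
      intro h
      have h1 := hT.1.dist_triangle (u := w) (v := p) (w := a)
      have h2 := hT.dist_eq_dist_add_one_of_adj w ha
      have h3 := dist_eq_one_iff_adj.2 hp
      have h4 := T.dist_comm (u := p) (v := θ)
      have h5 := T.dist_comm (u := w) (v := θ)
      omega
    have hup := ih p hpn (by omega)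
    rcases hT.dist_eq_dist_add_one_of_adj u hp with h | h
    · omega
    · exfalso
      by_cases hθ : θ = p
      · subst hθ
        have := closer_unique hT hp.symm ha h.symm hu
        subst this
        have h5 := T.dist_comm (u := w) (v := θ)
        simp at hw
        simp at hθp
        omega
      · obtain ⟨q, hq, hθq⟩ := exists_adj_closer hT hθ
        have h1 := hT.1.dist_triangle (u := u) (v := θ) (w := q)
        have h2 := hT.dist_eq_dist_add_one_of_adj u hq
        have := closer_unique hT hp.symm hq h.symm (by omega)
        subst this
        omega

/-- Every branch at a vertex of a finite tree contains a pendant vertex: a vertex of the branch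
farthest from `θ`. -/
lemma exists_pendant_in_branch_s18 [Finite V] {T : SimpleGraph V} (hT : T.IsTree) {θ a : V}
    (ha : T.Adj θ a) : ∃ w, IsPendant T w ∧ T.dist w a + 1 = T.dist w θ := by
  obtain ⟨w, hw, hmax⟩ := Set.exists_max_image {w | T.dist w a + 1 = T.dist w θ}
    (fun w => T.dist θ w) (Set.toFinite _)
    ⟨a, by simp [dist_eq_one_iff_adj.2 ha.symm]⟩
  simp only [Set.mem_ofPred_eq] at hw hmax
  refine ⟨w, ?_, hw⟩
  have hne : θ ≠ w := by
    rintro rfl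
    simp at hw
  obtain ⟨p, hp, hθp⟩ := exists_adj_closer hT hne
  refine Set.ncard_eq_one.2 ⟨p, Set.eq_singleton_iff_unique_mem.2 ⟨hp, fun q hq => ?_⟩⟩
  have hq : T.Adj w q := hq
  rcases hT.dist_eq_dist_add_one_of_adj θ hq with h | h
  · exact closer_unique hT hq hp h.symm hθp
  · exfalso
    have h1 := hT.1.dist_triangle (u := q) (v := w) (w := a)
    have h2 := hT.dist_eq_dist_add_one_of_adj q ha
    have h3 := dist_eq_one_iff_adj.2 hq.symm
    have h4 := T.dist_comm (u := q) (v := θ)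
    have h5 := T.dist_comm (u := w) (v := θ)
    have := hmax q (by omega)
    omega

lemma onPath_of_adj_closer {T : SimpleGraph V} (hT : T.IsTree) {u w x p : V}
    (hx : OnPath T u w x) (hp : T.Adj x p) (hup : T.dist u p + 1 = T.dist u x) :
    OnPath T u w p := by
  unfold OnPath at *
  have h1 := hT.1.dist_triangle (u := p) (v := x) (w := w)
  have h2 := hT.1.dist_triangle (u := u) (v := p) (w := w)
  have h3 := dist_eq_one_iff_adj.2 hp.symm
  omega

lemma OnPath.symm {T : SimpleGraph V} {u w x : V} (h : OnPath T u w x) : OnPath T w u x := by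
  unfold OnPath at *
  rw [T.dist_comm (u := w) (v := x), T.dist_comm (u := x) (v := u), T.dist_comm (u := w) (v := u),
    ← h, add_comm]

/-- A vertex `x` of the path between `u` and `w` is not the pendant end `u` if some neighbour of
`x` is off the path. -/
lemma ne_of_adj_not_onPath {T : SimpleGraph V} (hT : T.IsTree) {u w x a : V}
    (hu : IsPendant T u) (huw : u ≠ w) (ha : T.Adj x a)
    (han : ¬ OnPath T u w a) : u ≠ x := by
  rintro rfl
  obtain ⟨p, hp, hwp⟩ := exists_adj_closer hT huw.symm
  obtain ⟨y, hy⟩ := Set.ncard_eq_one.1 hu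
  have h1 : p ∈ T.neighborSet u := hp
  have h2 : a ∈ T.neighborSet u := ha
  rw [hy, Set.mem_singleton_iff] at h1 h2
  rw [h2, ← h1] at han
  refine han (onPath_of_adj_closer hT (u := w) (w := u) (x := u) ?_ hp hwp).symm
  simp [OnPath]

/-- If a finite tree has a major vertex `m`, every path between two pendant vertices contains a
major vertex, namely the vertex of the path closest to `m`: it is `m` itself, or it has two
neighbours along the path and a third one towards `m`. -/
lemma exists_major_onPath [Finite V] {T : SimpleGraph V} (hT : T.IsTree) {m u w : V}
    (hm : IsMajor T m) (hu : IsPendant T u) (hw : IsPendant T w) (huw : u ≠ w) :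
    ∃ x, IsMajor T x ∧ OnPath T u w x := by
  obtain ⟨x, hx, hmin⟩ := Set.exists_min_image {x | OnPath T u w x}
    (fun x => T.dist m x) (Set.toFinite _) ⟨u, by simp [OnPath]⟩
  simp only [Set.mem_ofPred_eq] at hx hmin
  refine ⟨x, ?_, hx⟩
  by_cases hmx : m = x
  · exact hmx ▸ hm
  obtain ⟨a, ha, hma⟩ := exists_adj_closer hT hmx
  have han : ¬ OnPath T u w a := fun h => by
    have := hmin a h
    omega
  have hux := ne_of_adj_not_onPath hT hu huw ha han
  have hwx := ne_of_adj_not_onPath hT hw huw.symm ha (fun h => han h.symm)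
  obtain ⟨p, hp, hup⟩ := exists_adj_closer hT hux
  obtain ⟨q, hq, hwq⟩ := exists_adj_closer hT hwx
  have hpo := onPath_of_adj_closer hT hx hp hup
  have hqo := (onPath_of_adj_closer hT hx.symm hq hwq).symm
  have hpa : p ≠ a := fun h => han (h ▸ hpo)
  have hqa : q ≠ a := fun h => han (h ▸ hqo)
  have hpq : p ≠ q := by
    rintro rfl
    unfold OnPath at hx hpo
    rw [T.dist_comm (u := x)] at hx
    rw [T.dist_comm (u := p)] at hpo
    omega
  have hsub : ({p, q, a} : Set V) ⊆ T.neighborSet x := by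
    rintro y (rfl | rfl | rfl)
    exacts [hp, hq, ha]
  have h3 : ({p, q, a} : Set V).ncard = 3 := Set.ncard_eq_three.2 ⟨p, q, a, hpq, hpa, hqa, rfl⟩
  exact h3.symm.trans_le (Set.ncard_le_ncard hsub (Set.toFinite _))

/-- Let `T` be a tree with at least one major vertex. Then the
following are equivalent: (i) `d(u,w) ≡ 2 (mod 3)` for all distinct pendant vertices
`u, w` of `T`; (ii) `d(u,θ) ≡ 1 (mod 3)` for every pendant vertex `u` and every major
vertex `θ` of `T`. -/
theorem stmt_18 {V : Type*} [Finite V] (T : SimpleGraph V) (hT : T.IsTree)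
    (m : V) (hm : IsMajor T m) :
    (∀ u w : V, IsPendant T u → IsPendant T w → u ≠ w → T.dist u w % 3 = 2) ↔
      (∀ u θ : V, IsPendant T u → IsMajor T θ → T.dist u θ % 3 = 1) := by
  constructor
  · intro h u θ hu hθ
    have huθ : u ≠ θ := by
      rintro rfl
      unfold IsPendant at hu
      unfold IsMajor at hθ
      omega
    obtain ⟨a, ha, hau⟩ := exists_adj_closer hT huθ
    -- two further branches at `θ`, each containing a pendant vertex
    obtain ⟨b, c, hb, hc, hba, hca, hbc⟩ :
        ∃ b c, T.Adj θ b ∧ T.Adj θ c ∧ b ≠ a ∧ c ≠ a ∧ b ≠ c := by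
      have h2 : 1 < (T.neighborSet θ \ {a}).ncard := by
        have := Set.ncard_sdiff_singleton_add_one (s := T.neighborSet θ) (a := a) ha
        unfold IsMajor at hθ
        omega
      obtain ⟨b, hb, c, hc, hbc⟩ := (Set.one_lt_ncard_iff_nontrivial).1 h2
      exact ⟨b, c, hb.1, hc.1, hb.2, hc.2, hbc⟩
    obtain ⟨w, hw, hbw⟩ := exists_pendant_in_branch_s18 hT hb
    obtain ⟨z, hz, hcz⟩ := exists_pendant_in_branch_s18 hT hc
    have key : ∀ {x y p q : V}, T.Adj θ p → T.Adj θ q → p ≠ q → IsPendant T x →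
        IsPendant T y → T.dist x p + 1 = T.dist x θ → T.dist y q + 1 = T.dist y θ →
        (T.dist x θ + T.dist y θ) % 3 = 2 := by
      intro x y p q hp hq hpq hx hy hxp hyq
      have hny : T.dist y p + 1 ≠ T.dist y θ := fun hyp =>
        hpq (closer_unique hT hp hq hyp hyq)
      have hxy := dist_eq_add_of_branch hT hp hxp y hny
      have hne : x ≠ y := by
        rintro rfl
        exact hny hxp
      rw [T.dist_comm (u := y), ← hxy]
      exact h x y hx hy hne
    have h1 := key ha hb hba.symm hu hw hau hbw
    have h2 := key ha hc hca.symm hu hz hau hcz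
    have h3 := key hb hc hbc hw hz hbw hcz
    omega
  · intro h u w hu hw huw
    obtain ⟨x, hx, hxp⟩ := exists_major_onPath hT hm hu hw huw
    have h1 := h u x hu hx
    have h2 := h w x hw hx
    unfold OnPath at hxp
    rw [T.dist_comm (u := x)] at hxp
    omega
end
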